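/- Let E be a real Banach space and let g : E × ℝ → ℝ be continuous such that the map G : E × ℝ → E × ℝ defined by G(e,t) = (e, g(e,t)) is proper. Assume that no point of E × ℝ has three distinct preimages under G, and that some point of E × ℝ has two distinct preimages under G. Then there exist a continuous function τ : E → ℝ and a sign ε ∈ {+1, −1}, independent of e, such that for every e ∈ E and s ∈ ℝ: the equation G(x) = (e,s) has exactly two solutions x ∈ E × ℝ if ε·(s − τ(e)) < 0, exactly one solution if s = τ(e), and no solution if ε·(s − τ(e)) > 0. -/

import Mathlib

/-!
On each line `{e} × ℝ`, properness makes `g (e, ·)` tend to `+∞` or to `-∞` at each end. Properness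
is uniform for nearby `e`, so the sign at each end is locally constant in `e`, hence constant as `E`
is connected. If the two signs differed, a value taken twice would be separated by both a smaller
and a larger value, forcing three preimages of some nearby value. So every `g (e, ·)` tends to the
same infinity at both ends, say `+∞`; its minimum `τ e` is attained once, larger values are attained
on both sides of the minimizer, and `τ` is continuous because its epigraph is the range of `G`,
which is closed, while an infimum of continuous functions is upper semicontinuous.
-/

open Filter Function Set Topology

/-- No three distinct points have a common value under `f`, i.e. each fiber of `f` has at most two
points; stated with points rather than cardinalities so that it applies directly. -/
def AtMostTwoToOne {X Y : Type*} (f : X → Y) : Prop :=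
  ∀ x y z, f x = f y → f y = f z → x = y ∨ y = z ∨ x = z

section Fibers

variable {X Y : Type*} {f : X → Y} {b : Y}

theorem encard_fiber_eq_two_iff :
    (f ⁻¹' {b}).encard = 2 ↔
      ∃ x y, x ≠ y ∧ f x = b ∧ f y = b ∧ ∀ z, f z = b → z = x ∨ z = y := by
  simp only [encard_eq_two, Set.ext_iff, mem_preimage, mem_singleton_iff, mem_insert_iff]
  refine exists₂_congr fun x y => and_congr_right fun _ => ⟨fun h => ?_, ?_⟩
  · exact ⟨(h x).2 (.inl rfl), (h y).2 (.inr rfl), fun z => (h z).1⟩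
  · rintro ⟨hx, hy, h⟩ z
    exact ⟨h z, by rintro (rfl | rfl) <;> assumption⟩

theorem encard_fiber_eq_one_iff : (f ⁻¹' {b}).encard = 1 ↔ ∃! x, f x = b := by
  simp only [encard_eq_one, singleton_iff_unique_mem, mem_preimage, mem_singleton_iff]

theorem encard_fiber_eq_zero_iff : (f ⁻¹' {b}).encard = 0 ↔ ¬∃ x, f x = b := by
  simp only [encard_eq_zero, preimage_singleton_eq_empty, mem_range]

theorem encard_fiber_prodMk_fst {E : Type*} (g : E × X → Y) (e : E) (s : Y) :
    ((fun p : E × X => (p.1, g p)) ⁻¹' {(e, s)}).encard = ((fun x => g (e, x)) ⁻¹' {s}).encard := by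
  have hfiber : (fun p : E × X => (p.1, g p)) ⁻¹' {(e, s)} =
      Prod.mk e '' ((fun x => g (e, x)) ⁻¹' {s}) := by
    ext ⟨e', x⟩
    simp only [mem_preimage, mem_singleton_iff, Prod.mk.injEq, mem_image]
    grind
  rw [hfiber, (Prod.mk_right_injective e).encard_image]

theorem AtMostTwoToOne.of_prodMk_fst {E : Type*} {g : E × X → Y}
    (h : AtMostTwoToOne fun p : E × X => (p.1, g p)) (e : E) :
    AtMostTwoToOne fun x => g (e, x) := fun x y z hxy hyz => by
  simpa using h (e, x) (e, y) (e, z) (by simpa using hxy) (by simpa using hyz)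

theorem exists_not_injective_of_prodMk_fst {E : Type*} {g : E × X → Y}
    (h : ∃ p q : E × X, p ≠ q ∧ (p.1, g p) = (q.1, g q)) :
    ∃ e, ¬Injective fun x => g (e, x) := by
  obtain ⟨⟨e, x⟩, ⟨e', y⟩, hne, heq⟩ := h
  obtain ⟨rfl, hxy⟩ : e = e' ∧ g (e, x) = g (e', y) := by simpa using heq
  exact ⟨e, fun hinj => hne (congrArg _ (hinj hxy))⟩

end Fibers

theorem exists_isLeast_range_of_tendsto {α β : Type*} [LinearOrder α] [Nonempty α]
    [TopologicalSpace α] [CompactIccSpace α] [LinearOrder β] [TopologicalSpace β]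
    [ClosedIicTopology β] {f : α → β} (hf : Continuous f) (hbot : Tendsto f atBot atTop)
    (htop : Tendsto f atTop atTop) : ∃ c, IsLeast (range f) c := by
  obtain ⟨m, hm⟩ := hf.exists_forall_le ((hbot.sup htop).mono_left cocompact_le_atBot_atTop)
  exact ⟨f m, mem_range_self m, forall_mem_range.2 hm⟩

section Order

variable {α β : Type*} [ConditionallyCompleteLinearOrder α] [TopologicalSpace α] [OrderTopology α]
  [DenselyOrdered α] [LinearOrder β] [TopologicalSpace β] [OrderClosedTopology β] {f : α → β}

theorem exists_gt_eq_of_tendsto_atTop (hf : Continuous f) (htop : Tendsto f atTop atTop)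
    {a : α} {s : β} (has : f a < s) : ∃ x, a < x ∧ f x = s := by
  obtain ⟨d, had, hsd⟩ := ((eventually_ge_atTop a).and (htop.eventually_ge_atTop s)).exists
  obtain ⟨x, hx, rfl⟩ := intermediate_value_Ioc had hf.continuousOn ⟨has, hsd⟩
  exact ⟨x, hx.1, rfl⟩

theorem exists_lt_eq_of_tendsto_atBot (hf : Continuous f) (hbot : Tendsto f atBot atTop)
    {a : α} {s : β} (has : f a < s) : ∃ x, x < a ∧ f x = s :=
  exists_gt_eq_of_tendsto_atTop (α := αᵒᵈ) hf hbot has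

theorem forall_ge_lt_of_forall_ge_ne (hf : Continuous f) {r : α} {c : β}
    (hne : ∀ t ≥ r, f t ≠ c) (hr : c < f r) : ∀ t ≥ r, c < f t := by
  intro t hrt
  by_contra! htc
  obtain ⟨u, hu, huc⟩ := intermediate_value_Icc' hrt hf.continuousOn ⟨htc, hr.le⟩
  exact hne u hu.1 huc

theorem range_eq_Ici_of_isLeast (hf : Continuous f) (htop : Tendsto f atTop atTop) {c : β}
    (hc : IsLeast (range f) c) : range f = Ici c := by
  refine Subset.antisymm hc.2 fun s (hcs : c ≤ s) => ?_
  obtain ⟨m, rfl⟩ := hc.1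
  obtain rfl | hms := hcs.eq_or_lt
  · exact mem_range_self m
  · obtain ⟨x, -, hx⟩ := exists_gt_eq_of_tendsto_atTop hf htop hms
    exact ⟨x, hx⟩

namespace AtMostTwoToOne

theorem lt_of_mem_Ioo [DenselyOrdered β] (h : AtMostTwoToOne f) (hf : Continuous f)
    (htop : Tendsto f atTop atTop) {a b c : α} (hab : f a = f b) (hc : c ∈ Ioo a b) :
    f c < f a := by
  obtain ⟨hac, hcb⟩ := hc
  by_contra! hle
  have hne : f a ≠ f c := fun hac' => by
    rcases h a c b hac' (hac'.symm.trans hab) with rfl | rfl | rfl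
    exacts [hac.false, hcb.false, (hac.trans hcb).false]
  -- A value slightly above `f a = f b` is attained on `(a, c)`, on `(c, b)` and beyond `b`.
  obtain ⟨s, has, hsc⟩ := exists_between (hle.lt_of_ne hne)
  obtain ⟨x, hx, hxs⟩ := intermediate_value_Ioo hac.le hf.continuousOn ⟨has, hsc⟩
  obtain ⟨y, hy, hys⟩ := intermediate_value_Ioo' hcb.le hf.continuousOn ⟨hab ▸ has, hsc⟩
  obtain ⟨z, hbz, hzs⟩ := exists_gt_eq_of_tendsto_atTop hf htop (hab ▸ has)
  have hxy : x < y := hx.2.trans hy.1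
  have hyz : y < z := hy.2.trans hbz
  rcases h x y z (hxs.trans hys.symm) (hys.trans hzs.symm) with hxy' | hyz' | hxz'
  exacts [hxy.ne hxy', hyz.ne hyz', (hxy.trans hyz).ne hxz']

theorem injective_of_tendsto [DenselyOrdered β] (h : AtMostTwoToOne f) (hf : Continuous f)
    (hbot : Tendsto f atBot atBot) (htop : Tendsto f atTop atTop) : Injective f := by
  refine .of_lt_imp_ne fun a b hab hfab => ?_
  obtain ⟨c, hac, hcb⟩ := exists_between hab
  have hlt : f c < f a := h.lt_of_mem_Ioo hf htop hfab ⟨hac, hcb⟩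
  have hgt : f b < f c :=
    lt_of_mem_Ioo (α := αᵒᵈ) (β := βᵒᵈ) (f := f) h hf hbot hfab.symm ⟨hcb, hac⟩
  exact (hlt.trans (hfab ▸ hgt)).false

theorem encard_fiber_eq_one [DenselyOrdered β] (h : AtMostTwoToOne f) (hf : Continuous f)
    (htop : Tendsto f atTop atTop) {c : β} (hc : IsLeast (range f) c) :
    (f ⁻¹' {c}).encard = 1 := by
  have hnot_lt : ∀ ⦃a b⦄, f a = c → f b = c → ¬a < b := fun a b ha hb hab => by
    obtain ⟨d, hd⟩ := exists_between hab
    have hdc : f d < c := ha ▸ h.lt_of_mem_Ioo hf htop (ha.trans hb.symm) hd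
    exact hdc.not_ge (hc.2 (mem_range_self d))
  obtain ⟨m, hm⟩ := hc.1
  exact encard_fiber_eq_one_iff.2
    ⟨m, hm, fun x hx => le_antisymm (not_lt.1 (hnot_lt hm hx)) (not_lt.1 (hnot_lt hx hm))⟩

theorem encard_fiber_eq_two (h : AtMostTwoToOne f) (hf : Continuous f)
    (hbot : Tendsto f atBot atTop) (htop : Tendsto f atTop atTop) {m : α} {s : β} (hms : f m < s) :
    (f ⁻¹' {s}).encard = 2 := by
  obtain ⟨x, hxm, hx⟩ := exists_lt_eq_of_tendsto_atBot hf hbot hms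
  obtain ⟨y, hmy, hy⟩ := exists_gt_eq_of_tendsto_atTop hf htop hms
  have hxy : x ≠ y := (hxm.trans hmy).ne
  refine encard_fiber_eq_two_iff.2 ⟨x, y, hxy, hx, hy, fun z hz => ?_⟩
  have hcoincide : z = x ∨ x = y ∨ z = y := h z x y (hz.trans hx.symm) (hx.trans hy.symm)
  tauto

end AtMostTwoToOne

end Order

theorem tendsto_atTop_of_tendsto_cocompact_of_le {X β : Type*} [LinearOrder β] [TopologicalSpace β]
    [CompactIccSpace β] {f : X → β} {l : Filter X} {c : β} (hf : Tendsto f l (cocompact β))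
    (hc : ∀ᶠ x in l, c ≤ f x) : Tendsto f l atTop := by
  refine tendsto_atTop.2 fun M => ?_
  filter_upwards [hc, hf.eventually isCompact_Icc.compl_mem_cocompact] with x hcx hx
  exact (not_le.1 fun hxM => hx ⟨hcx, hxM⟩).le

section FiberPreserving

variable {E X Y : Type*} [TopologicalSpace E] [TopologicalSpace X] [TopologicalSpace Y]

theorem tendsto_cocompact_of_isProperMap {g : E × X → Y}
    (hG : IsProperMap fun p : E × X => (p.1, g p)) {l : Filter X}
    (hl : ∀ x, Disjoint (𝓝 x) l) (e : E) : Tendsto g (𝓝 e ×ˢ l) (cocompact Y) := by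
  -- Along an ultrafilter on which `g` stayed in a compact set, `(e, x) ↦ (e, g (e, x))` would
  -- converge, so by properness the ultrafilter itself would converge.
  refine (tendsto_iff_ultrafilter _ _ _).2 fun 𝒰 h𝒰 =>
    hasBasis_cocompact.tendsto_right_iff.2 fun K hK => Ultrafilter.eventually_not.2 fun h𝒰K => ?_
  obtain ⟨h𝒰e, h𝒰l⟩ := tendsto_prod_iff'.1 (tendsto_id'.2 h𝒰)
  obtain ⟨y, -, hy⟩ := hK.ultrafilter_le_nhds (𝒰.map g) (le_principal_iff.2 h𝒰K)
  obtain ⟨p, -, hp⟩ := hG.ultrafilter_le_nhds_of_tendsto (h𝒰e.prodMk_nhds hy)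
  exact ((continuous_snd.tendsto p).mono_left hp).not_tendsto (hl p.2) h𝒰l

theorem continuous_of_range_eq_Ici {β : Type*} [LinearOrder β] [TopologicalSpace β]
    [OrderTopology β] {g : E × X → β} {τ : E → β} (hg : Continuous g)
    (hclosed : IsClosed (range fun p : E × X => (p.1, g p)))
    (hτ : ∀ e, range (fun x => g (e, x)) = Ici (τ e)) : Continuous τ := by
  refine continuous_iff_lower_upperSemicontinuous.2
    ⟨lowerSemicontinuous_iff_isClosed_epigraph.2 ?_, fun e s hs => ?_⟩
  · have hrange : {p : E × β | τ p.1 ≤ p.2} = range fun p : E × X => (p.1, g p) := by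
      ext ⟨e, s⟩
      simpa using (Set.ext_iff.1 (hτ e) s).symm
    exact hrange ▸ hclosed
  · obtain ⟨x, hx⟩ : ∃ x, g (e, x) = τ e := (hτ e).ge self_mem_Ici
    have hlt : ∀ᶠ e' in 𝓝 e, g (e', x) < s :=
      (Continuous.continuousAt (by fun_prop)).eventually_lt_const (hx ▸ hs)
    filter_upwards [hlt] with e' he'
    have hle : τ e' ≤ g (e', x) := (hτ e').le (mem_range_self x)
    exact hle.trans_lt he'

end FiberPreserving

section OrderedFibers

variable {E α β : Type*} [TopologicalSpace E]
  [ConditionallyCompleteLinearOrder α] [TopologicalSpace α] [OrderTopology α]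
  [DenselyOrdered α] [LinearOrder β] [TopologicalSpace β] [OrderTopology β] {g : E × α → β}

theorem eventually_tendsto_atTop_of_forall_ge_ne [NoMaxOrder α] [CompactIccSpace β]
    (hG : IsProperMap fun p : E × α => (p.1, g p)) {e : E} {r : α} {c : β}
    (hne : ∀ᶠ e' in 𝓝 e, ∀ t ≥ r, g (e', t) ≠ c) (hr : c < g (e, r)) :
    ∀ᶠ e' in 𝓝 e, Tendsto (fun t => g (e', t)) atTop atTop := by
  have hg : Continuous g := hG.continuous.snd
  have hlt : ∀ᶠ e' in 𝓝 e, c < g (e', r) :=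
    (Continuous.continuousAt (by fun_prop)).eventually_const_lt hr
  filter_upwards [hne, hlt] with e' hne' hlt'
  have hcocompact : Tendsto (fun t => g (e', t)) atTop (cocompact β) :=
    (tendsto_cocompact_of_isProperMap hG disjoint_nhds_atTop e').comp
      (tendsto_const_nhds.prodMk tendsto_id)
  refine tendsto_atTop_of_tendsto_cocompact_of_le (c := c) hcocompact ?_
  filter_upwards [eventually_ge_atTop r] with t hrt
  exact (forall_ge_lt_of_forall_ge_ne (by fun_prop) hne' hlt' t hrt).le

theorem eventually_tendsto_atTop_or_atBot [Nonempty α] [NoMaxOrder α] [CompactIccSpace β]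
    (hG : IsProperMap fun p : E × α => (p.1, g p)) (e : E) :
    (∀ᶠ e' in 𝓝 e, Tendsto (fun t => g (e', t)) atTop atTop) ∨
      ∀ᶠ e' in 𝓝 e, Tendsto (fun t => g (e', t)) atTop atBot := by
  obtain ⟨c⟩ : Nonempty β := ‹Nonempty α›.map fun t => g (e, t)
  have hne : ∀ᶠ p in 𝓝 e ×ˢ atTop, g p ≠ c :=
    (tendsto_cocompact_of_isProperMap hG disjoint_nhds_atTop e).eventually
      isCompact_singleton.compl_mem_cocompact
  obtain ⟨U, hU, V, hV, hUV⟩ := eventually_prod_iff.1 hne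
  obtain ⟨r, hr⟩ := eventually_atTop.1 hV
  have hne' : ∀ᶠ e' in 𝓝 e, ∀ t ≥ r, g (e', t) ≠ c :=
    hU.mono fun e' he' t ht => hUV he' (hr t ht)
  rcases (hne'.self_of_nhds r le_rfl).lt_or_gt with hlt | hgt
  · exact .inr (eventually_tendsto_atTop_of_forall_ge_ne (β := βᵒᵈ) hG hne' hlt)
  · exact .inl (eventually_tendsto_atTop_of_forall_ge_ne hG hne' hgt)

theorem forall_tendsto_atTop_or_atBot [PreconnectedSpace E] [Nonempty α] [NoMaxOrder α]
    [CompactIccSpace β] [Nontrivial β] (hG : IsProperMap fun p : E × α => (p.1, g p)) :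
    (∀ e, Tendsto (fun t => g (e, t)) atTop atTop) ∨
      ∀ e, Tendsto (fun t => g (e, t)) atTop atBot := by
  have hnot_both (e : E) (htop : Tendsto (fun t => g (e, t)) atTop atTop) :
      ¬Tendsto (fun t => g (e, t)) atTop atBot := htop.not_tendsto disjoint_atTop_atBot
  have hclopen : IsClopen {e | Tendsto (fun t => g (e, t)) atTop atTop} := by
    refine ⟨⟨isOpen_iff_mem_nhds.2 fun e he => ?_⟩, isOpen_iff_mem_nhds.2 fun e he => ?_⟩ <;>
      rcases eventually_tendsto_atTop_or_atBot hG e with htop | hbot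
    · exact absurd htop.self_of_nhds he
    · exact hbot.mono fun e' hbot' htop' => hnot_both e' htop' hbot'
    · exact htop
    · exact absurd hbot.self_of_nhds (hnot_both e he)
  rcases isClopen_iff.1 hclopen with hempty | huniv
  · refine .inr fun e => ?_
    rcases eventually_tendsto_atTop_or_atBot hG e with htop | hbot
    · exact absurd htop.self_of_nhds (eq_empty_iff_forall_notMem.1 hempty e)
    · exact hbot.self_of_nhds
  · exact .inl (eq_univ_iff_forall.1 huniv)

theorem exists_continuous_encard_fiber_of_tendsto_atTop [Nonempty α] [DenselyOrdered β]
    (hG : IsProperMap fun p : E × α => (p.1, g p))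
    (h : ∀ e, AtMostTwoToOne fun t => g (e, t))
    (hbot : ∀ e, Tendsto (fun t => g (e, t)) atBot atTop)
    (htop : ∀ e, Tendsto (fun t => g (e, t)) atTop atTop) :
    ∃ τ : E → β, Continuous τ ∧ ∀ e s,
      (τ e < s → ((fun t => g (e, t)) ⁻¹' {s}).encard = 2) ∧
      (s = τ e → ((fun t => g (e, t)) ⁻¹' {s}).encard = 1) ∧
      (s < τ e → ((fun t => g (e, t)) ⁻¹' {s}).encard = 0) := by
  have hg (e : E) : Continuous fun t => g (e, t) := hG.continuous.snd.comp (by fun_prop)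
  choose τ hτ using fun e => exists_isLeast_range_of_tendsto (hg e) (hbot e) (htop e)
  have hτ_cont : Continuous τ := continuous_of_range_eq_Ici hG.continuous.snd
    hG.isClosedMap.isClosed_range fun e => range_eq_Ici_of_isLeast (hg e) (htop e) (hτ e)
  refine ⟨τ, hτ_cont, fun e s => ⟨fun hs => ?_, ?_, fun hs => ?_⟩⟩
  · obtain ⟨m, hm⟩ := (hτ e).1
    exact (h e).encard_fiber_eq_two (hg e) (hbot e) (htop e) (hm ▸ hs)
  · rintro rfl
    exact (h e).encard_fiber_eq_one (hg e) (htop e) (hτ e)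
  · exact encard_fiber_eq_zero_iff.2 fun hmem => hs.not_ge ((hτ e).2 hmem)

theorem exists_continuous_encard_fiber_of_tendsto_atBot [Nonempty α] [DenselyOrdered β]
    (hG : IsProperMap fun p : E × α => (p.1, g p))
    (h : ∀ e, AtMostTwoToOne fun t => g (e, t))
    (hbot : ∀ e, Tendsto (fun t => g (e, t)) atBot atBot)
    (htop : ∀ e, Tendsto (fun t => g (e, t)) atTop atBot) :
    ∃ τ : E → β, Continuous τ ∧ ∀ e s,
      (s < τ e → ((fun t => g (e, t)) ⁻¹' {s}).encard = 2) ∧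
      (s = τ e → ((fun t => g (e, t)) ⁻¹' {s}).encard = 1) ∧
      (τ e < s → ((fun t => g (e, t)) ⁻¹' {s}).encard = 0) :=
  exists_continuous_encard_fiber_of_tendsto_atTop (β := βᵒᵈ) hG h hbot htop

end OrderedFibers

theorem stmt11_general {E : Type*} [TopologicalSpace E] [PreconnectedSpace E]
    (g : E × ℝ → ℝ) (G : E × ℝ → E × ℝ) (hG : ∀ p : E × ℝ, G p = (p.1, g p))
    (hproper : IsProperMap G)
    (hno3 : ∀ p q r : E × ℝ, G p = G q → G q = G r → p = q ∨ q = r ∨ p = r)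
    (h2 : ∃ p q : E × ℝ, p ≠ q ∧ G p = G q) :
    ∃ (τ : E → ℝ) (ε : ℝ), Continuous τ ∧ (ε = 1 ∨ ε = -1) ∧
      ∀ (e : E) (s : ℝ),
        (ε * (s - τ e) < 0 →
          ∃ x y : E × ℝ, x ≠ y ∧ G x = (e, s) ∧ G y = (e, s) ∧
            ∀ z : E × ℝ, G z = (e, s) → z = x ∨ z = y) ∧
        (s = τ e → ∃! x : E × ℝ, G x = (e, s)) ∧
        (0 < ε * (s - τ e) → ¬ ∃ x : E × ℝ, G x = (e, s)) := by
  obtain rfl : G = fun p => (p.1, g p) := funext hG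
  have hg (e : E) : Continuous fun t => g (e, t) := hproper.continuous.snd.comp (by fun_prop)
  have h3 : ∀ e, AtMostTwoToOne fun t => g (e, t) := AtMostTwoToOne.of_prodMk_fst hno3
  obtain ⟨e₀, hninj⟩ := exists_not_injective_of_prodMk_fst h2
  simp only [← encard_fiber_eq_two_iff, ← encard_fiber_eq_one_iff, ← encard_fiber_eq_zero_iff,
    encard_fiber_prodMk_fst]
  rcases forall_tendsto_atTop_or_atBot hproper with htop | htop <;>
    rcases forall_tendsto_atTop_or_atBot (α := ℝᵒᵈ) hproper with hbot | hbot
  · obtain ⟨τ, hτ, hcard⟩ := exists_continuous_encard_fiber_of_tendsto_atTop hproper h3 hbot htop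
    refine ⟨τ, -1, hτ, .inr rfl, fun e s => ?_⟩
    simpa only [neg_one_mul, neg_sub, sub_neg, sub_pos] using hcard e s
  · exact absurd ((h3 e₀).injective_of_tendsto (hg e₀) (hbot e₀) (htop e₀)) hninj
  · exact absurd ((h3 e₀).injective_of_tendsto (β := ℝᵒᵈ) (hg e₀) (hbot e₀) (htop e₀)) hninj
  · obtain ⟨τ, hτ, hcard⟩ := exists_continuous_encard_fiber_of_tendsto_atBot hproper h3 hbot htop
    refine ⟨τ, 1, hτ, .inl rfl, fun e s => ?_⟩
    simpa only [one_mul, sub_neg, sub_pos] using hcard e s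

/-- Exact multiplicity for a proper fiber-preserving continuous map `G (e,t) = (e, g (e,t))`
on `E × ℝ` (`E` a real Banach space) such that no point has three distinct preimages and
some point has two distinct preimages: there are a continuous `τ : E → ℝ` and a sign
`ε ∈ {+1, -1}` such that `G x = (e, s)` has exactly two solutions if `ε (s - τ e) < 0`,
exactly one if `s = τ e`, and none if `ε (s - τ e) > 0`. -/
theorem stmt11 {E : Type*} [NormedAddCommGroup E] [NormedSpace ℝ E] [CompleteSpace E]
    (g : E × ℝ → ℝ) (hg : Continuous g)
    (G : E × ℝ → E × ℝ) (hG : ∀ p : E × ℝ, G p = (p.1, g p))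
    (hproper : ∀ K : Set (E × ℝ), IsCompact K → IsCompact (G ⁻¹' K))
    (hno3 : ∀ p q r : E × ℝ, G p = G q → G q = G r → p = q ∨ q = r ∨ p = r)
    (h2 : ∃ p q : E × ℝ, p ≠ q ∧ G p = G q) :
    ∃ (τ : E → ℝ) (ε : ℝ), Continuous τ ∧ (ε = 1 ∨ ε = -1) ∧
      ∀ (e : E) (s : ℝ),
        (ε * (s - τ e) < 0 →
          ∃ x y : E × ℝ, x ≠ y ∧ G x = (e, s) ∧ G y = (e, s) ∧
            ∀ z : E × ℝ, G z = (e, s) → z = x ∨ z = y) ∧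
        (s = τ e → ∃! x : E × ℝ, G x = (e, s)) ∧
        (0 < ε * (s - τ e) → ¬ ∃ x : E × ℝ, G x = (e, s)) :=
  stmt11_general g G hG
    (isProperMap_iff_isCompact_preimage.2 ⟨funext hG ▸ by fun_prop, hproper⟩) hno3 h2
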